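/- arXiv:1009.1123 — 2 statements merged into one kernel-verified Lean document; each statement's English description precedes it below -/
import Mathlib

section
/- Let g^ℂ be a finite-dimensional complex semisimple Lie algebra with Cartan subalgebra h, root system R, positive system R⁺ and a fixed Weyl basis {E_α}. Let τ be the compact antiinvolution (the antilinear involutive automorphism with τ|_{h(ℝ)} = −Id on the real span h(ℝ) of the coroots and τ(E_α) = −E_{−α} for all α ∈ R), and g = (g^ℂ)^τ the compact real form. Given constants μ_α ∈ ℂ (α ∈ R⁺), define the covector ξ := −Σ_{α∈R⁺} μ_α ω_α + Σ_{α∈R⁺} conj(μ_α) ω_{−α} and the 2-form B := dξ on g^ℂ, B(x,y) = −ξ([x,y]). Then: (1) ξ takes real values on g; and (2) for any subspace h₀ ⊆ h, the restriction of B to the subalgebra k = h₀ ⊕ g(R⁺) equals Σ_{α∈R⁺} μ_α α∧ω_α + (1/2) Σ_{α,β∈R⁺} μ_{α+β} N_{αβ} ω_α∧ω_β (the term μ_{α+β}N_{αβ} interpreted as 0 when α+β ∉ R). -/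
/-- An antilinear involutive automorphism (a "conjugation") of a complex Lie
algebra; its fixed point set is a real form. -/
structure LieAntiInvolution (L : Type*) [LieRing L] [LieAlgebra ℂ L] where
  toFun : L → L
  map_add' : ∀ x y, toFun (x + y) = toFun x + toFun y
  map_smul' : ∀ (c : ℂ) (x), toFun (c • x) = (starRingEnd ℂ) c • toFun x
  map_lie' : ∀ x y, toFun ⁅x, y⁆ = ⁅toFun x, toFun y⁆
  invol : ∀ x, toFun (toFun x) = x

open Finset
open scoped Classical

/-!
Subtracting `∑ ω_α(x) E_α` from `x ∈ k` leaves an element of the abelian algebra `h₀`, so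
`⁅x, y⁆` is an explicit combination of the vectors `E_α` and `⁅E_α, E_β⁆` with `α, β` positive, and
(2) is read off from `ξ(E_α) = -μ_α`; the factor `1/2` comes from antisymmetrizing the double sum in
`α` and `β`. For (1), comparing values on `H` and on the root vectors gives
`ω_α ∘ τ = -conj ∘ ω_{-α}`; hence on fixed points of `τ` the terms `-μ_α ω_α` and
`conj(μ_α) ω_{-α}` of `ξ` are conjugate.
-/

section LinearAlgebra

variable {K M ι : Type*} [CommRing K] [AddCommGroup M] [Module K M]
  {A B : Submodule K M} {s t : Finset ι} {e : ι → M} {ω : ι → Module.Dual K M}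

/-- The covectors `ω i` (`i ∈ s`) are dual to the vectors `e i` (`i ∈ s`) and vanish on the
subspace `A`, such as a Cartan subalgebra when the `e i` are root vectors. -/
structure IsDualFamily (A : Submodule K M) (s : Finset ι) (e : ι → M)
    (ω : ι → Module.Dual K M) : Prop where
  apply_of_mem : ∀ i ∈ s, ∀ a ∈ A, ω i a = 0
  apply_vector : ∀ i ∈ s, ∀ j ∈ s, ω i (e j) = if i = j then 1 else 0

namespace IsDualFamily

theorem mono (h : IsDualFamily A s e ω) (hBA : B ≤ A) (hts : t ⊆ s) : IsDualFamily B t e ω where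
  apply_of_mem i hi b hb := h.apply_of_mem i (hts hi) b (hBA hb)
  apply_vector i hi j hj := h.apply_vector i (hts hi) j (hts hj)

theorem apply_add_sum_smul (h : IsDualFamily A s e ω) {a : M} (ha : a ∈ A) (c : ι → K)
    {i : ι} (hi : i ∈ s) : ω i (a + ∑ j ∈ s, c j • e j) = c i := by
  rw [map_add, h.apply_of_mem i hi a ha, zero_add, map_sum, sum_eq_single_of_mem i hi]
  · rw [map_smul, h.apply_vector i hi i hi, if_pos rfl, smul_eq_mul, mul_one]
  · intro j hj hji
    rw [map_smul, h.apply_vector i hi j hj, if_neg hji.symm, smul_zero]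

theorem exists_eq_add_sum_smul (h : IsDualFamily A s e ω) {x : M}
    (hx : x ∈ A ⊔ Submodule.span K (e '' s)) : ∃ a ∈ A, x = a + ∑ i ∈ s, ω i x • e i := by
  obtain ⟨a, ha, v, hv, rfl⟩ := Submodule.mem_sup.mp hx
  obtain ⟨c, rfl⟩ := Submodule.mem_span_image_finset_iff_exists_fun' K |>.mp hv
  refine ⟨a, ha, congrArg (a + ·) (sum_congr rfl fun i hi => ?_)⟩
  rw [h.apply_add_sum_smul ha c hi]

theorem apply_semilinear_eq_neg_star [InvolutiveNeg ι] [StarRing K] (h : IsDualFamily A s e ω)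
    (hspan : A ⊔ Submodule.span K (e '' s) = ⊤) (hneg : ∀ i ∈ s, -i ∈ s)
    {τ : M →ₛₗ[starRingEnd K] M} (hτA : ∀ a ∈ A, τ a ∈ A) (hτe : ∀ i ∈ s, τ (e i) = -e (-i))
    {i : ι} (hi : i ∈ s) (x : M) : ω i (τ x) = -star (ω (-i) x) := by
  suffices hle : A ⊔ Submodule.span K (e '' s) ≤
      LinearMap.eqLocus (ω i ∘ₛₗ τ) (-((starRingEnd K).toSemilinearMap ∘ₛₗ ω (-i))) from
    hle (hspan ▸ Submodule.mem_top)
  refine sup_le (fun a ha => ?_) (Submodule.span_le.mpr ?_)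
  · change ω i (τ a) = -star (ω (-i) a)
    rw [h.apply_of_mem i hi _ (hτA a ha), h.apply_of_mem _ (hneg i hi) a ha, star_zero, neg_zero]
  · rintro _ ⟨j, hj, rfl⟩
    change ω i (τ (e j)) = -star (ω (-i) (e j))
    rw [hτe j hj, map_neg, h.apply_vector i hi _ (hneg j hj), h.apply_vector _ (hneg i hi) j hj,
      apply_ite star, star_one, star_zero]
    simp only [neg_eq_iff_eq_neg]

end IsDualFamily

/-- The covector `ξ = -∑ μ_α ω_α + ∑ conj(μ_α) ω_{-α}`, summed over the positive roots `α ∈ P`,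
whose differential is the `B`-field. -/
def bFieldCovector [Neg ι] [StarRing K] (P : Finset ι) (μ : ι → K) (ω : ι → Module.Dual K M) :
    Module.Dual K M :=
  -∑ α ∈ P, μ α • ω α + ∑ α ∈ P, starRingEnd K (μ α) • ω (-α)

theorem bFieldCovector_apply [Neg ι] [StarRing K] (P : Finset ι) (μ : ι → K)
    (ω : ι → Module.Dual K M) (x : M) :
    bFieldCovector P μ ω x = ∑ α ∈ P, (-(μ α * ω α x) + star (μ α) * ω (-α) x) := by
  simp only [bFieldCovector, LinearMap.add_apply, LinearMap.neg_apply, LinearMap.sum_apply,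
    LinearMap.smul_apply, smul_eq_mul, starRingEnd_apply, sum_add_distrib, sum_neg_distrib]

theorem IsDualFamily.bFieldCovector_apply_vector [Neg ι] [StarRing K] (h : IsDualFamily A s e ω)
    (hneg : ∀ i ∈ s, -i ∈ s) {P : Finset ι} (hPs : P ⊆ s) (hP : ∀ α ∈ P, -α ∉ P) (μ : ι → K)
    {β : ι} (hβ : β ∈ P) : bFieldCovector P μ ω (e β) = -μ β := by
  have hω_neg : ∀ α ∈ P, ω (-α) (e β) = 0 := fun α hα => by
    rw [h.apply_vector _ (hneg α (hPs hα)) β (hPs hβ),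
      if_neg (ne_of_mem_of_not_mem hβ (hP α hα)).symm]
  rw [bFieldCovector_apply, sum_eq_single_of_mem β hβ]
  · rw [hω_neg β hβ, h.apply_vector β (hPs hβ) β (hPs hβ), if_pos rfl, mul_one, mul_zero, add_zero]
  · intro α hα hαβ
    rw [hω_neg α hα, h.apply_vector α (hPs hα) β (hPs hβ), if_neg hαβ, mul_zero, mul_zero,
      neg_zero, add_zero]

theorem isSelfAdjoint_bFieldCovector_apply [Neg ι] [StarRing K] {P : Finset ι} (μ : ι → K)
    {x : M} (hx : ∀ α ∈ P, ω α x = -star (ω (-α) x)) :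
    IsSelfAdjoint (bFieldCovector P μ ω x) := by
  rw [bFieldCovector_apply]
  refine isSelfAdjoint_sum P fun α hα => ?_
  have hconj : -(μ α * ω α x) = star (star (μ α) * ω (-α) x) := by
    rw [hx α hα, star_mul', star_star, mul_neg, neg_neg]
  exact hconj ▸ IsSelfAdjoint.star_add_self _

end LinearAlgebra

section Bracket

variable {K L ι : Type*} [LieRing L]

theorem sum_sum_smul_lie_eq_half [Field K] [NeZero (2 : K)] [LieAlgebra K L]
    (s : Finset ι) (e : ι → L) (u v : ι → K) :
    ∑ i ∈ s, ∑ j ∈ s, (u i * v j) • ⁅e i, e j⁆ =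
      (1 / 2 : K) • ∑ i ∈ s, ∑ j ∈ s, (u i * v j - v i * u j) • ⁅e i, e j⁆ := by
  have hswap : ∑ i ∈ s, ∑ j ∈ s, (v i * u j) • ⁅e i, e j⁆ =
      -∑ i ∈ s, ∑ j ∈ s, (u i * v j) • ⁅e i, e j⁆ := by
    rw [sum_comm]
    simp only [← sum_neg_distrib, ← smul_neg, lie_skew, mul_comm]
  simp only [sub_smul, sum_sub_distrib]
  rw [hswap, sub_neg_eq_add, ← two_smul K, smul_smul, one_div_mul_cancel two_ne_zero, one_smul]

theorem IsDualFamily.lie_eq_sum_smul_add_sum_sum_smul_lie [CommRing K] [LieAlgebra K L]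
    {A : Submodule K L} {s : Finset ι} {e : ι → L} {ω χ : ι → Module.Dual K L}
    (h : IsDualFamily A s e ω) (hA : ∀ a ∈ A, ∀ b ∈ A, ⁅a, b⁆ = 0)
    (hχ : ∀ i ∈ s, ∀ a ∈ A, ⁅a, e i⁆ = χ i a • e i)
    (hχe : ∀ i ∈ s, ∀ j ∈ s, χ i (e j) = 0) {x y : L}
    (hx : x ∈ A ⊔ Submodule.span K (e '' s)) (hy : y ∈ A ⊔ Submodule.span K (e '' s)) :
    ⁅x, y⁆ = ∑ i ∈ s, (χ i x * ω i y - χ i y * ω i x) • e i +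
      ∑ i ∈ s, ∑ j ∈ s, (ω i x * ω j y) • ⁅e i, e j⁆ := by
  have hχ_add (a : L) (c : ι → K) : ∀ i ∈ s, χ i (a + ∑ j ∈ s, c j • e j) = χ i a :=
    fun i hi => by
      rw [map_add, map_sum, sum_eq_zero fun j hj => by rw [map_smul, hχe i hi j hj, smul_zero],
        add_zero]
  have hlie_sum : ∀ a ∈ A, ∀ c : ι → K,
      ⁅a, ∑ i ∈ s, c i • e i⁆ = ∑ i ∈ s, (χ i a * c i) • e i := fun a ha c => by
    rw [lie_sum]
    exact sum_congr rfl fun i hi => by rw [lie_smul, hχ i hi a ha, smul_smul, mul_comm]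
  obtain ⟨a, ha, hxa⟩ := h.exists_eq_add_sum_smul hx
  obtain ⟨b, hb, hyb⟩ := h.exists_eq_add_sum_smul hy
  have hχx : ∀ i ∈ s, χ i x = χ i a := fun i hi => by rw [hxa, hχ_add a _ i hi]
  have hχy : ∀ i ∈ s, χ i y = χ i b := fun i hi => by rw [hyb, hχ_add b _ i hi]
  calc ⁅x, y⁆ = ⁅a + ∑ i ∈ s, ω i x • e i, b + ∑ i ∈ s, ω i y • e i⁆ := by rw [← hxa, ← hyb]
    _ = ⁅a, ∑ i ∈ s, ω i y • e i⁆ - ⁅b, ∑ i ∈ s, ω i x • e i⁆ +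
        ∑ i ∈ s, ∑ j ∈ s, ⁅ω i x • e i, ω j y • e j⁆ := by
      rw [add_lie, lie_add, lie_add, hA a ha b hb, ← lie_skew _ b, sum_lie_sum]
      abel
    _ = _ := by
      rw [hlie_sum a ha, hlie_sum b hb, ← sum_sub_distrib]
      simp only [smul_lie, lie_smul, smul_smul, ← sub_smul]
      congr 1
      · exact sum_congr rfl fun i hi => by rw [hχx i hi, hχy i hi]
      · exact sum_congr rfl fun i _ => sum_congr rfl fun j _ => by rw [mul_comm]

theorem neg_apply_lie_eq_mul_structureConst [CommRing K] [LieAlgebra K L] [AddGroup ι]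
    {R P : Finset ι} {E : ι → L} {N : ι → ι → K} {μ : ι → K} {ξ : Module.Dual K L}
    (hξ : ∀ γ ∈ P, ξ (E γ) = -μ γ) (hP : ∀ α ∈ P, -α ∉ P) {α β : ι} (hα : α ∈ P) (hβ : β ∈ P)
    (hclosed : α + β ∈ R → α + β ∈ P)
    (hbracket : α + β ∈ R → ⁅E α, E β⁆ = N α β • E (α + β))
    (hbracket0 : α + β ≠ 0 → α + β ∉ R → ⁅E α, E β⁆ = 0)
    (hN0 : α + β ∉ R → N α β = 0) :
    -ξ ⁅E α, E β⁆ = μ (α + β) * N α β := by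
  by_cases hR : α + β ∈ R
  · rw [hbracket hR, map_smul, hξ _ (hclosed hR), smul_eq_mul, mul_neg, neg_neg, mul_comm]
  · have hne : α + β ≠ 0 := fun h0 => hP α hα (neg_eq_of_add_eq_zero_right h0 ▸ hβ)
    rw [hbracket0 hne hR, hN0 hR, map_zero, neg_zero, mul_zero]

end Bracket

/-- The conjugation as a map semilinear over complex conjugation. -/
def LieAntiInvolution.toSemilinearMap {L : Type*} [LieRing L] [LieAlgebra ℂ L]
    (τ : LieAntiInvolution L) : L →ₛₗ[starRingEnd ℂ] L where
  toFun := τ.toFun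
  map_add' := τ.map_add'
  map_smul' := τ.map_smul'

theorem b_field_covector_real_and_restriction_general
    {K L : Type*} [Field K] [NeZero (2 : K)] [StarRing K] [LieRing L] [LieAlgebra K L]
    {H : Submodule K L} {R P : Finset (Module.Dual K L)} {E : Module.Dual K L → L}
    {N : Module.Dual K L → Module.Dual K L → K} {ω : Module.Dual K L → Module.Dual K L}
    (hH : ∀ x ∈ H, ∀ y ∈ H, ⁅x, y⁆ = 0)
    (hRneg : ∀ α ∈ R, -α ∈ R)
    (hroot : ∀ α ∈ R, ∀ x ∈ H, ⁅x, E α⁆ = α x • E α)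
    (hαE : ∀ α ∈ R, ∀ β ∈ R, α (E β) = 0)
    (hbracket : ∀ α ∈ R, ∀ β ∈ R, α + β ∈ R → ⁅E α, E β⁆ = N α β • E (α + β))
    (hbracket0 : ∀ α ∈ R, ∀ β ∈ R, α + β ≠ 0 → α + β ∉ R → ⁅E α, E β⁆ = 0)
    (hN0 : ∀ α β, α + β ∉ R → N α β = 0)
    (hspan : H ⊔ Submodule.span K (E '' R) = ⊤)
    (hω : IsDualFamily H R E ω)
    (hPR : P ⊆ R)
    (hPclosed : ∀ α ∈ P, ∀ β ∈ P, α + β ∈ R → α + β ∈ P)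
    (hPneg : ∀ α ∈ P, -α ∉ P)
    {τ : L →ₛₗ[starRingEnd K] L}
    (hτH : ∀ x ∈ H, τ x ∈ H)
    (hτE : ∀ α ∈ R, τ (E α) = -E (-α))
    (μ : Module.Dual K L → K)
    {h₀ : Submodule K L} (hh₀ : h₀ ≤ H) :
    (∀ x, τ x = x → IsSelfAdjoint (bFieldCovector P μ ω x)) ∧
    ∀ x ∈ h₀ ⊔ Submodule.span K (E '' P), ∀ y ∈ h₀ ⊔ Submodule.span K (E '' P),
      -bFieldCovector P μ ω ⁅x, y⁆ = ∑ α ∈ P, μ α * (α x * ω α y - α y * ω α x) +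
        (1 / 2) * ∑ α ∈ P, ∑ β ∈ P,
          μ (α + β) * N α β * (ω α x * ω β y - ω α y * ω β x) := by
  constructor
  · intro x hx
    refine isSelfAdjoint_bFieldCovector_apply μ fun α hα => ?_
    simpa only [hx] using hω.apply_semilinear_eq_neg_star hspan hRneg hτH hτE (hPR hα) x
  · intro x hx y hy
    have hξE : ∀ α ∈ P, bFieldCovector P μ ω (E α) = -μ α :=
      fun α => hω.bFieldCovector_apply_vector hRneg hPR hPneg μ
    rw [(hω.mono hh₀ hPR).lie_eq_sum_smul_add_sum_sum_smul_lie (χ := id)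
        (fun a ha b hb => hH a (hh₀ ha) b (hh₀ hb))
        (fun α hα a ha => hroot α (hPR hα) a (hh₀ ha))
        (fun α hα β hβ => hαE α (hPR hα) β (hPR hβ)) hx hy,
      sum_sum_smul_lie_eq_half, map_add, map_smul, neg_add, smul_eq_mul, ← mul_neg]
    simp only [map_sum, map_smul, smul_eq_mul, id_eq, ← sum_neg_distrib, ← mul_neg]
    congr 1
    · exact sum_congr rfl fun α hα => by rw [hξE α hα, neg_neg, mul_comm]
    · congr 1
      refine sum_congr rfl fun α hα => sum_congr rfl fun β hβ => ?_
      rw [neg_apply_lie_eq_mul_structureConst hξE hPneg hα hβ (hPclosed α hα β hβ)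
        (hbracket α (hPR hα) β (hPR hβ)) (hbracket0 α (hPR hα) β (hPR hβ)) (hN0 α β)]
      ring

/-- **Proposition `B-field`.**  Let `gC` be a finite-dimensional complex
semisimple Lie algebra with Cartan subalgebra `H`, root system `R`, positive system
`Rpos` and Weyl basis `{E α}` with structure constants `N` and dual covectors `ωc α`.
Let `τ` be the compact antiinvolution (`τ = -Id` on the real span of the coroots and
`τ(E α) = -E (-α)`), with compact real form `g = fix(τ)`.  For constants `μ α`
(`α ∈ Rpos`) let `ξ := -∑ μ_α ω_α + ∑ conj(μ_α) ω_{-α}` and `B := dξ`, i.e.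
`B(x,y) = -ξ ⁅x,y⁆`.  Then (1) `ξ` takes real values on `g`, and (2) on the
subalgebra `k = h₀ ⊕ g(Rpos)` the form `B` equals
`∑ μ_α α∧ω_α + (1/2) ∑ μ_{α+β} N_{αβ} ω_α∧ω_β`. -/
theorem b_field_covector_real_and_restriction
    {gC : Type*} [LieRing gC] [LieAlgebra ℂ gC] [FiniteDimensional ℂ gC]
    [LieAlgebra.IsSemisimple ℂ gC]
    (H : LieSubalgebra ℂ gC) [H.IsCartanSubalgebra]
    (R : Finset (Module.Dual ℂ gC))
    (E : Module.Dual ℂ gC → gC)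
    (N : Module.Dual ℂ gC → Module.Dual ℂ gC → ℝ)
    (ωc : Module.Dual ℂ gC → Module.Dual ℂ gC)
    -- properties of the root space decomposition and the Weyl basis
    (habel : ∀ x ∈ H, ∀ y ∈ H, ⁅x, y⁆ = (0 : gC))
    (hRne : ∀ α ∈ R, α ≠ (0 : Module.Dual ℂ gC))
    (hRneg : ∀ α ∈ R, -α ∈ R)
    (hEne : ∀ α ∈ R, E α ≠ 0)
    (hroot : ∀ α ∈ R, ∀ x ∈ H, ⁅x, E α⁆ = α x • E α)
    (hαE : ∀ α ∈ R, ∀ β ∈ R, α (E β) = 0)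
    (hbracket : ∀ α ∈ R, ∀ β ∈ R, α + β ∈ R → ⁅E α, E β⁆ = (N α β : ℝ) • E (α + β))
    (hbracket0 : ∀ α ∈ R, ∀ β ∈ R, α + β ≠ 0 → α + β ∉ R → ⁅E α, E β⁆ = 0)
    (hcoroot : ∀ α ∈ R, ⁅E α, E (-α)⁆ ∈ H)
    (hN0 : ∀ α β, α + β ∉ R → N α β = 0)
    (hNneg : ∀ α β, N (-α) (-β) = - N α β)
    (hindep : LinearIndependent ℂ (fun α : {x : Module.Dual ℂ gC // x ∈ R} => E ↑α))
    (hdisj : Disjoint H.toSubmodule (Submodule.span ℂ (E '' ↑R)))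
    (hdecomp : H.toSubmodule ⊔ Submodule.span ℂ (E '' ↑R) = ⊤)
    (hωcH : ∀ α ∈ R, ∀ x ∈ H, ωc α x = 0)
    (hωcE : ∀ α ∈ R, ∀ β ∈ R, ωc α (E β) = if α = β then 1 else 0)
    -- the positive root system
    (Rpos : Finset (Module.Dual ℂ gC))
    (hRposR : Rpos ⊆ R)
    (hRposClosed : ∀ α ∈ Rpos, ∀ β ∈ Rpos, α + β ∈ R → α + β ∈ Rpos)
    (hRposTotal : ∀ α ∈ R, α ∈ Rpos ∨ -α ∈ Rpos)
    (hRposDisj : ∀ α ∈ Rpos, -α ∉ Rpos)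
    -- the compact antiinvolution `τ`
    (τ : LieAntiInvolution gC)
    (hτH : ∀ x ∈ H, τ.toFun x ∈ H)
    (hτE : ∀ α ∈ R, τ.toFun (E α) = -E (-α))
    (hτcoroot : ∀ α ∈ R, τ.toFun ⁅E α, E (-α)⁆ = -⁅E α, E (-α)⁆)
    -- the constants and the covector `ξ`
    (μ : Module.Dual ℂ gC → ℂ)
    (ξ : Module.Dual ℂ gC)
    (hξ : ξ = -∑ α ∈ Rpos, μ α • ωc α
            + ∑ α ∈ Rpos, (starRingEnd ℂ) (μ α) • ωc (-α))
    -- the subalgebra `k = h₀ + g(Rpos)`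
    (h₀ : Submodule ℂ gC) (hh₀ : h₀ ≤ H.toSubmodule)
    (k : Submodule ℂ gC)
    (hk : k = h₀ ⊔ Submodule.span ℂ (E '' ↑Rpos)) :
    -- (1) `ξ` takes real values on the compact real form `g`
    (∀ x : gC, τ.toFun x = x → (ξ x).im = 0)
    -- (2) the restriction of `B = dξ` to `k`
    ∧ (∀ x ∈ k, ∀ y ∈ k,
        -ξ ⁅x, y⁆ = ∑ α ∈ Rpos, μ α * (α x * ωc α y - α y * ωc α x)
          + (1/2) * ∑ α ∈ Rpos, ∑ β ∈ Rpos,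
              μ (α + β) * (N α β : ℂ) * (ωc α x * ωc β y - ωc α y * ωc β x)) := by
  subst hξ hk
  have hmain := b_field_covector_real_and_restriction_general
    (N := fun α β => (N α β : ℂ)) (τ := τ.toSemilinearMap) habel hRneg hroot hαE hbracket
    hbracket0 (fun α β hαβ => Complex.ofReal_eq_zero.mpr (hN0 α β hαβ)) hdecomp ⟨hωcH, hωcE⟩
    hRposR hRposClosed hRposDisj hτH hτE μ hh₀
  exact hmain.imp_left fun hreal x hx => Complex.conj_eq_iff_im.mp (hreal x hx)
end

section
/- Let g^ℂ be a finite-dimensional complex semisimple Lie algebra, σ an antilinear involutive automorphism with fixed-point set g, h a σ-invariant Cartan subalgebra with root system R, and fix a Weyl basis {E_α}. Let R₀ ⊆ R be a σ-positive system and k = h₀ + g(R₀) a Lie subalgebra with h₀ ⊆ h and h₀ + σ(h₀) = h. Set 𝒮 := Span_ℂ{[E_α, E_{−α}] : α ∈ R₀^sym} and assume 𝒮 ⊆ h₀ and 𝒮 ∩ σ(𝒮) = {0}. Let ω̂₀ ∈ Λ²(h₀*) be a 2-form with ω̂₀(s, ·) = 0 for every s ∈ 𝒮 and such that Im(ω̂₀)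 is nondegenerate on l := (h₀ ∩ σ(h₀)) ∩ g. Then, denoting again by ω̂₀ its trivial extension to k (by 0 on g(R₀)), the pair (k, ω̂₀) is a g-admissible pair. -/
/-- The action of a conjugation `σ` on linear functionals: `σ(α) := conj ∘ α ∘ σ`. -/
noncomputable def LieAntiInvolution.dualConj {L : Type*} [LieRing L] [LieAlgebra ℂ L]
    (σ : LieAntiInvolution L) (α : Module.Dual ℂ L) : Module.Dual ℂ L where
  toFun x := (starRingEnd ℂ) (α (σ.toFun x))
  map_add' x y := by simp only [σ.map_add', map_add]
  map_smul' c x := by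
    simp only [σ.map_smul', map_smul, smul_eq_mul, map_mul, Complex.conj_conj,
      RingHom.id_apply]

section Semilinear

variable {A M : Type*} [Ring A] [AddCommGroup M] [Module A M] {s : A →+* A} [RingHomSurjective s]
  {τ : M →ₛₗ[s] M}

lemma mem_sup_map_iff {p : Submodule A M} {x : M} :
    x ∈ p ⊔ p.map τ ↔ ∃ a ∈ p, ∃ b ∈ p, x = a + τ b := by
  simp only [Submodule.mem_sup, Submodule.mem_map, exists_exists_and_eq_and,
    eq_comm (a := x)]

lemma mem_left_of_mem_sup_of_map_eq {H h₀ V : Submodule A M} (hτH : ∀ x ∈ H, τ x ∈ H)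
    (hh₀ : h₀ ≤ H) (hHV : Disjoint H (V ⊔ V.map τ)) (hV : Disjoint V (V.map τ))
    {x : M} (hx : x ∈ h₀ ⊔ V) (hτx : τ x = x) : x ∈ h₀ := by
  obtain ⟨a, ha, u, hu, rfl⟩ := Submodule.mem_sup.1 hx
  have hτu : τ u ∈ V.map τ := Submodule.mem_map_of_mem hu
  have hcomp : τ a - a = u - τ u := by
    rw [sub_eq_sub_iff_add_eq_add, ← map_add, hτx, add_comm]
  have hH : u - τ u ∈ H := hcomp ▸ H.sub_mem (hτH a (hh₀ ha)) (hh₀ ha)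
  have hVV : u - τ u ∈ V ⊔ V.map τ :=
    Submodule.sub_mem _ (Submodule.mem_sup_left hu) (Submodule.mem_sup_right hτu)
  have hu_fixed : u = τ u := sub_eq_zero.1 (Submodule.disjoint_def.1 hHV _ hH hVV)
  have hu_zero : u = 0 := Submodule.disjoint_def.1 hV u hu (hu_fixed ▸ hτu)
  rwa [hu_zero, add_zero]

end Semilinear

section TwoForm

variable {K M : Type*} [CommRing K] [AddCommGroup M] [Module K M]

lemma apply_eq_zero_of_mem_sup {ω : LinearMap.BilinForm K M} {h₀ S V : Submodule K M}
    (halt : (ω.restrict (h₀ ⊔ V)).IsAlt) (hSh₀ : S ≤ h₀)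
    (hS : ∀ s ∈ S, ∀ y ∈ h₀, ω s y = 0) (hV : ∀ v ∈ V, ∀ y ∈ h₀ ⊔ V, ω v y = 0) :
    ∀ w ∈ S ⊔ V, ∀ y ∈ h₀ ⊔ V, ω w y = 0 := by
  intro w hw y hy
  obtain ⟨s, hs, v, hv, rfl⟩ := Submodule.mem_sup.1 hw
  obtain ⟨a, ha, u, hu, rfl⟩ := Submodule.mem_sup.1 hy
  have hsk : s ∈ h₀ ⊔ V := Submodule.mem_sup_left (hSh₀ hs)
  have hsu : ω s u = 0 :=
    halt.isRefl ⟨u, Submodule.mem_sup_right hu⟩ ⟨s, hsk⟩ (hV u hu s hsk)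
  calc ω (s + v) (a + u) = ω s a + ω s u + ω v (a + u) := by
        rw [map_add ω, LinearMap.add_apply, map_add (ω s)]
    _ = 0 := by rw [hS s hs a ha, hsu, hV v hv _ hy, add_zero, add_zero]

variable {L : Type*} [LieRing L] [LieAlgebra K L]

/-- Closedness of the 2-form `ω|_k` on a Lie subalgebra `k`. Forms on `k` are represented by
bilinear forms on the ambient Lie algebra `L`, whose values outside `k` are irrelevant. -/
def IsClosedOn (k : Submodule K L) (ω : LinearMap.BilinForm K L) : Prop :=
  ∀ x ∈ k, ∀ y ∈ k, ∀ z ∈ k, ω x ⁅y, z⁆ + ω z ⁅x, y⁆ + ω y ⁅z, x⁆ = 0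

lemma isClosedOn_of_lie_mem {k n : Submodule K L} {ω : LinearMap.BilinForm K L}
    (halt : (ω.restrict k).IsAlt) (hnk : n ≤ k) (hlie : ∀ x ∈ k, ∀ y ∈ k, ⁅x, y⁆ ∈ n)
    (hn : ∀ w ∈ n, ∀ x ∈ k, ω w x = 0) : IsClosedOn k ω := by
  have hterm : ∀ x ∈ k, ∀ y ∈ k, ∀ z ∈ k, ω x ⁅y, z⁆ = 0 := fun x hx y hy z hz =>
    halt.isRefl ⟨_, hnk (hlie y hy z hz)⟩ ⟨x, hx⟩ (hn _ (hlie y hy z hz) x hx)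
  intro x hx y hy z hz
  rw [hterm x hx y hy z hz, hterm z hz x hx y hy, hterm y hy z hz x hx, add_zero, add_zero]

end TwoForm

section RootSpaces

variable {K L : Type*} [CommRing K] [LieRing L] [LieAlgebra K L]

/-- The subspace `g(P) = ⊕_{α ∈ P} g_α`, spanned by the chosen root vectors `E α`. -/
def rootSpan (E : Module.Dual K L → L) (P : Set (Module.Dual K L)) : Submodule K L :=
  Submodule.span K (E '' P)

/-- The subspace `𝒮` spanned by the brackets `[E_α, E_{-α}]` over `α ∈ P^sym = P ∩ (-P)`. -/
def symSpan (E : Module.Dual K L → L) (P : Set (Module.Dual K L)) : Submodule K L :=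
  Submodule.span K {x | ∃ α ∈ P, -α ∈ P ∧ x = ⁅E α, E (-α)⁆}

/-- A decomposition `L = H ⊕ ⨁_{α ∈ R} K E_α` into an abelian subspace `H` and root lines, with the
bracket relations of a Weyl basis. Roots are functionals on all of `L`, of which only the values
on `H` enter the first bracket relation. -/
structure IsRootDecomposition (H : Submodule K L) (R : Set (Module.Dual K L))
    (E : Module.Dual K L → L) : Prop where
  lie_cartan_eq_zero : ∀ x ∈ H, ∀ y ∈ H, ⁅x, y⁆ = 0
  lie_root : ∀ α ∈ R, ∀ x ∈ H, ⁅x, E α⁆ = α x • E α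
  lie_root_root : ∀ α ∈ R, ∀ β ∈ R, α + β ∈ R → ∃ c : K, ⁅E α, E β⁆ = c • E (α + β)
  lie_root_root_eq_zero : ∀ α ∈ R, ∀ β ∈ R, α + β ≠ 0 → α + β ∉ R → ⁅E α, E β⁆ = 0
  linearIndepOn : LinearIndepOn K E R
  isCompl : IsCompl H (rootSpan E R)

lemma lie_mem_of_mem_span {s t : Set L} {N : Submodule K L} (h : ∀ x ∈ s, ∀ y ∈ t, ⁅x, y⁆ ∈ N)
    {x y : L} (hx : x ∈ Submodule.span K s) (hy : y ∈ Submodule.span K t) : ⁅x, y⁆ ∈ N :=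
  LinearMap.BilinMap.apply_apply_mem_of_mem_span N s t (LieModule.toEnd K L L : L →ₗ[K] _) h x y
    hx hy

variable {E : Module.Dual K L → L} {P Q R : Set (Module.Dual K L)} {H h₀ : Submodule K L}

lemma root_mem_rootSpan {α : Module.Dual K L} (hα : α ∈ P) : E α ∈ rootSpan E P :=
  Submodule.subset_span (Set.mem_image_of_mem E hα)

lemma rootSpan_union : rootSpan E (P ∪ Q) = rootSpan E P ⊔ rootSpan E Q := by
  rw [rootSpan, Set.image_union, Submodule.span_union, rootSpan, rootSpan]

namespace IsRootDecomposition

lemma disjoint_rootSpan (hE : IsRootDecomposition H R E) (hR : P ∪ Q ⊆ R) (hPQ : Disjoint P Q) :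
    Disjoint (rootSpan E P) (rootSpan E Q) :=
  ((linearIndepOn_union_iff hPQ).1 (hE.linearIndepOn.mono hR)).2.2

lemma lie_mem_rootSpan (hE : IsRootDecomposition H R E) (hPR : P ⊆ R) {x v : L} (hx : x ∈ H)
    (hv : v ∈ rootSpan E P) : ⁅x, v⁆ ∈ rootSpan E P := by
  refine lie_mem_of_mem_span (s := (H : Set L)) ?_ (Submodule.subset_span hx) hv
  rintro x hx _ ⟨α, hα, rfl⟩
  rw [hE.lie_root α (hPR hα) x hx]
  exact Submodule.smul_mem _ _ (root_mem_rootSpan hα)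

lemma lie_rootSpan_mem (hE : IsRootDecomposition H R E) (hPR : P ⊆ R)
    (hP : ∀ α ∈ P, ∀ β ∈ P, α + β ∈ R → α + β ∈ P) {u v : L} (hu : u ∈ rootSpan E P)
    (hv : v ∈ rootSpan E P) : ⁅u, v⁆ ∈ symSpan E P ⊔ rootSpan E P := by
  refine lie_mem_of_mem_span ?_ hu hv
  rintro _ ⟨α, hα, rfl⟩ _ ⟨β, hβ, rfl⟩
  by_cases hzero : α + β = 0
  · obtain rfl := eq_neg_of_add_eq_zero_right hzero
    exact Submodule.mem_sup_left (Submodule.subset_span ⟨α, hα, hβ, rfl⟩)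
  by_cases hroot : α + β ∈ R
  · obtain ⟨c, hc⟩ := hE.lie_root_root α (hPR hα) β (hPR hβ) hroot
    rw [hc]
    exact Submodule.mem_sup_right
      (Submodule.smul_mem _ _ (root_mem_rootSpan (hP α hα β hβ hroot)))
  · rw [hE.lie_root_root_eq_zero α (hPR hα) β (hPR hβ) hzero hroot]
    exact Submodule.zero_mem _

lemma lie_mem_symSpan_sup_rootSpan (hE : IsRootDecomposition H R E) (hPR : P ⊆ R)
    (hP : ∀ α ∈ P, ∀ β ∈ P, α + β ∈ R → α + β ∈ P) (hh₀ : h₀ ≤ H) :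
    ∀ x ∈ h₀ ⊔ rootSpan E P, ∀ y ∈ h₀ ⊔ rootSpan E P, ⁅x, y⁆ ∈ symSpan E P ⊔ rootSpan E P := by
  intro x hx y hy
  obtain ⟨a, ha, u, hu, rfl⟩ := Submodule.mem_sup.1 hx
  obtain ⟨b, hb, v, hv, rfl⟩ := Submodule.mem_sup.1 hy
  have hexpand : ⁅a + u, b + v⁆ = ⁅a, v⁆ - ⁅b, u⁆ + ⁅u, v⁆ := by
    rw [add_lie, lie_add, lie_add, hE.lie_cartan_eq_zero a (hh₀ ha) b (hh₀ hb), ← lie_skew b u]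
    abel
  rw [hexpand]
  refine Submodule.add_mem _ (Submodule.mem_sup_right (Submodule.sub_mem _ ?_ ?_))
    (hE.lie_rootSpan_mem hPR hP hu hv)
  · exact hE.lie_mem_rootSpan hPR (hh₀ ha) hv
  · exact hE.lie_mem_rootSpan hPR (hh₀ hb) hu

end IsRootDecomposition

end RootSpaces

namespace LieAntiInvolution

variable {L : Type*} [LieRing L] [LieAlgebra ℂ L] {σ : LieAntiInvolution L}

/-- The conjugation `σ` as a semilinear map, so that `σ(p)` is a `Submodule.map`. -/
def toSemilinearMap_s15 (σ : LieAntiInvolution L) : L →ₛₗ[starRingEnd ℂ] L where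
  toFun := σ.toFun
  map_add' := σ.map_add'
  map_smul' := σ.map_smul'

/-- A `σ`-positive system: a closed subset `R₀` of the roots such that `R` is the disjoint union of
`R₀` and `σ(R₀)`. -/
structure IsPositiveSystem (σ : LieAntiInvolution L) (R R₀ : Set (Module.Dual ℂ L)) : Prop where
  add_mem : ∀ α ∈ R₀, ∀ β ∈ R₀, α + β ∈ R → α + β ∈ R₀
  union_image : R₀ ∪ σ.dualConj '' R₀ = R
  inter_image : R₀ ∩ σ.dualConj '' R₀ = ∅

/-- Nondegeneracy of `Im ω` on the real subspace `p ∩ g` of `σ`-fixed vectors of `p`. -/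
def IsImNondegenerateOn (σ : LieAntiInvolution L) (p : Submodule ℂ L)
    (ω : LinearMap.BilinForm ℂ L) : Prop :=
  ∀ x ∈ p, σ.toFun x = x → (∀ y ∈ p, σ.toFun y = y → (ω x y).im = 0) → x = 0

/-- A `g`-admissible pair `(k, ω)`, where `g` is the fixed-point set of `σ`. The 2-form on `k` is
the restriction of a bilinear form `ω` on the ambient Lie algebra. -/
structure IsAdmissiblePair (σ : LieAntiInvolution L) (k : Submodule ℂ L)
    (ω : LinearMap.BilinForm ℂ L) : Prop where
  lie_mem : ∀ x ∈ k, ∀ y ∈ k, ⁅x, y⁆ ∈ k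
  isAlt : (ω.restrict k).IsAlt
  isClosedOn : IsClosedOn k ω
  exists_eq_add : ∀ x, ∃ a ∈ k, ∃ b ∈ k, x = a + σ.toFun b
  isImNondegenerateOn : σ.IsImNondegenerateOn k ω

lemma map_rootSpan {E : Module.Dual ℂ L → L} {P : Set (Module.Dual ℂ L)}
    (hσE : ∀ α ∈ P, ∃ c : ℂ, c ≠ 0 ∧ σ.toFun (E α) = c • E (σ.dualConj α)) :
    (rootSpan E P).map σ.toSemilinearMap_s15 = rootSpan E (σ.dualConj '' P) := by
  rw [rootSpan, Submodule.map_span]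
  refine le_antisymm (Submodule.span_le.2 ?_) (Submodule.span_le.2 ?_)
  · rintro _ ⟨_, ⟨α, hα, rfl⟩, rfl⟩
    obtain ⟨c, -, hc⟩ := hσE α hα
    change σ.toFun (E α) ∈ rootSpan E _
    rw [hc]
    exact Submodule.smul_mem _ _ (root_mem_rootSpan (Set.mem_image_of_mem _ hα))
  · rintro _ ⟨_, ⟨α, hα, rfl⟩, rfl⟩
    obtain ⟨c, hc₀, hc⟩ := hσE α hα
    rw [← inv_smul_smul₀ hc₀ (E (σ.dualConj α)), ← hc]
    exact Submodule.smul_mem _ _ (Submodule.subset_span ⟨E α, ⟨α, hα, rfl⟩, rfl⟩)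

lemma IsPositiveSystem.subset {R R₀ : Set (Module.Dual ℂ L)} (hR₀ : σ.IsPositiveSystem R R₀) :
    R₀ ⊆ R :=
  hR₀.union_image ▸ Set.subset_union_left

section PositiveSystem

variable {H h₀ : Submodule ℂ L} {R R₀ : Set (Module.Dual ℂ L)} {E : Module.Dual ℂ L → L}

lemma IsPositiveSystem.rootSpan_sup_map (hR₀ : σ.IsPositiveSystem R R₀)
    (hσE : ∀ α ∈ R₀, ∃ c : ℂ, c ≠ 0 ∧ σ.toFun (E α) = c • E (σ.dualConj α)) :
    rootSpan E R₀ ⊔ (rootSpan E R₀).map σ.toSemilinearMap_s15 = rootSpan E R := by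
  rw [map_rootSpan hσE, ← rootSpan_union, hR₀.union_image]

lemma IsPositiveSystem.disjoint_rootSpan_map (hR₀ : σ.IsPositiveSystem R R₀)
    (hE : IsRootDecomposition H R E)
    (hσE : ∀ α ∈ R₀, ∃ c : ℂ, c ≠ 0 ∧ σ.toFun (E α) = c • E (σ.dualConj α)) :
    Disjoint (rootSpan E R₀) ((rootSpan E R₀).map σ.toSemilinearMap_s15) := by
  rw [map_rootSpan hσE]
  exact hE.disjoint_rootSpan hR₀.union_image.le
    (Set.disjoint_iff_inter_eq_empty.2 hR₀.inter_image)

lemma IsPositiveSystem.sup_map_eq_top (hR₀ : σ.IsPositiveSystem R R₀)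
    (hE : IsRootDecomposition H R E)
    (hσE : ∀ α ∈ R₀, ∃ c : ℂ, c ≠ 0 ∧ σ.toFun (E α) = c • E (σ.dualConj α))
    (hH : H ≤ h₀ ⊔ h₀.map σ.toSemilinearMap_s15) :
    (h₀ ⊔ rootSpan E R₀) ⊔ (h₀ ⊔ rootSpan E R₀).map σ.toSemilinearMap_s15 = ⊤ := by
  rw [Submodule.map_sup, sup_sup_sup_comm, hR₀.rootSpan_sup_map hσE]
  exact eq_top_mono (sup_le_sup_right hH _) hE.isCompl.sup_eq_top

lemma IsPositiveSystem.mem_of_mem_sup_rootSpan (hR₀ : σ.IsPositiveSystem R R₀)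
    (hE : IsRootDecomposition H R E)
    (hσE : ∀ α ∈ R₀, ∃ c : ℂ, c ≠ 0 ∧ σ.toFun (E α) = c • E (σ.dualConj α))
    (hσH : ∀ x ∈ H, σ.toFun x ∈ H) (hh₀ : h₀ ≤ H) {x : L} (hx : x ∈ h₀ ⊔ rootSpan E R₀)
    (hσx : σ.toFun x = x) : x ∈ h₀ :=
  mem_left_of_mem_sup_of_map_eq (τ := σ.toSemilinearMap_s15) hσH hh₀
    (hR₀.rootSpan_sup_map hσE ▸ hE.isCompl.disjoint) (hR₀.disjoint_rootSpan_map hE hσE) hx hσx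

end PositiveSystem

lemma IsImNondegenerateOn.of_le {p q : Submodule ℂ L} {ω : LinearMap.BilinForm ℂ L}
    (hp : σ.IsImNondegenerateOn p ω) (hpq : p ≤ q) (hq : ∀ x ∈ q, σ.toFun x = x → x ∈ p) :
    σ.IsImNondegenerateOn q ω :=
  fun x hx hσx h => hp x (hq x hx hσx) hσx fun y hy hσy => h y (hpq hy) hσy

end LieAntiInvolution

theorem trivial_extension_admissible_pair_general {L : Type*} [LieRing L] [LieAlgebra ℂ L]
    {σ : LieAntiInvolution L} {H h₀ : Submodule ℂ L} {R R₀ : Set (Module.Dual ℂ L)}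
    {E : Module.Dual ℂ L → L} {ω : LinearMap.BilinForm ℂ L}
    (hσH : ∀ x ∈ H, σ.toFun x ∈ H) (hE : IsRootDecomposition H R E)
    (hR₀ : σ.IsPositiveSystem R R₀)
    (hσE : ∀ α ∈ R₀, ∃ c : ℂ, c ≠ 0 ∧ σ.toFun (E α) = c • E (σ.dualConj α))
    (hh₀ : h₀ ≤ H) (hH : ∀ x ∈ H, ∃ a ∈ h₀, ∃ b ∈ h₀, x = a + σ.toFun b)
    (hS : symSpan E R₀ ≤ h₀)
    (halt : (ω.restrict (h₀ ⊔ rootSpan E R₀)).IsAlt)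
    (hωV : ∀ v ∈ rootSpan E R₀, ∀ y ∈ h₀ ⊔ rootSpan E R₀, ω v y = 0)
    (hωS : ∀ s ∈ symSpan E R₀, ∀ y ∈ h₀, ω s y = 0)
    (hω : σ.IsImNondegenerateOn h₀ ω) :
    σ.IsAdmissiblePair (h₀ ⊔ rootSpan E R₀) ω := by
  have hlie := hE.lie_mem_symSpan_sup_rootSpan hR₀.subset hR₀.add_mem hh₀
  have hSk : symSpan E R₀ ⊔ rootSpan E R₀ ≤ h₀ ⊔ rootSpan E R₀ := sup_le_sup_right hS _
  have hspan := hR₀.sup_map_eq_top hE hσE fun x hx => mem_sup_map_iff.2 (hH x hx)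
  exact
    { lie_mem := fun x hx y hy => hSk (hlie x hx y hy)
      isAlt := halt
      isClosedOn := isClosedOn_of_lie_mem halt hSk hlie (apply_eq_zero_of_mem_sup halt hS hωS hωV)
      exists_eq_add := fun x => mem_sup_map_iff.1 (hspan ▸ Submodule.mem_top)
      isImNondegenerateOn := hω.of_le le_sup_left fun _ =>
        hR₀.mem_of_mem_sup_rootSpan hE hσE hσH hh₀ }

/-- Let `gC` be a finite-dimensional complex semisimple Lie
algebra, `σ` a conjugation with real form `g`, `H` a `σ`-invariant Cartan
subalgebra with root system `R` and a Weyl basis `{E α}`.  Let `R₀ ⊆ R` be a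
`σ`-positive system and `k = h₀ + g(R₀)` a Lie subalgebra with `h₀ ⊆ H` and
`h₀ + σ(h₀) = H`.  Let `𝒮 := span{⁅E α, E (-α)⁆ : α ∈ R₀^sym}` and assume
`𝒮 ⊆ h₀` and `𝒮 ∩ σ(𝒮) = {0}`.  If `ω̂₀` is a 2-form on `h₀` with
`ω̂₀(s, ·) = 0` for `s ∈ 𝒮` and `Im ω̂₀` nondegenerate on
`l := (h₀ ∩ σ(h₀)) ∩ g`, then (denoting again by `ω̂₀` its trivial extension to
`k`) the pair `(k, ω̂₀)` is a `g`-admissible pair. -/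
theorem trivial_extension_admissible_pair
    {gC : Type*} [LieRing gC] [LieAlgebra ℂ gC] [FiniteDimensional ℂ gC]
    [LieAlgebra.IsSemisimple ℂ gC]
    (σ : LieAntiInvolution gC)
    (H : LieSubalgebra ℂ gC) [H.IsCartanSubalgebra]
    (hσH : ∀ x ∈ H, σ.toFun x ∈ H)
    (R : Finset (Module.Dual ℂ gC))
    (E : Module.Dual ℂ gC → gC)
    (N : Module.Dual ℂ gC → Module.Dual ℂ gC → ℝ)
    -- properties of the root space decomposition and the Weyl basis
    (habel : ∀ x ∈ H, ∀ y ∈ H, ⁅x, y⁆ = (0 : gC))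
    (hRne : ∀ α ∈ R, α ≠ (0 : Module.Dual ℂ gC))
    (hRneg : ∀ α ∈ R, -α ∈ R)
    (hEne : ∀ α ∈ R, E α ≠ 0)
    (hroot : ∀ α ∈ R, ∀ x ∈ H, ⁅x, E α⁆ = α x • E α)
    (hαE : ∀ α ∈ R, ∀ β ∈ R, α (E β) = 0)
    (hbracket : ∀ α ∈ R, ∀ β ∈ R, α + β ∈ R → ⁅E α, E β⁆ = (N α β : ℂ) • E (α + β))
    (hbracket0 : ∀ α ∈ R, ∀ β ∈ R, α + β ≠ 0 → α + β ∉ R → ⁅E α, E β⁆ = 0)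
    (hcoroot : ∀ α ∈ R, ⁅E α, E (-α)⁆ ∈ H)
    (hindep : LinearIndependent ℂ (fun α : {x : Module.Dual ℂ gC // x ∈ R} => E ↑α))
    (hdisj : Disjoint H.toSubmodule (Submodule.span ℂ (E '' ↑R)))
    (hdecomp : H.toSubmodule ⊔ Submodule.span ℂ (E '' ↑R) = ⊤)
    -- `σ` acts on the roots and the root vectors
    (hσR : ∀ α ∈ R, σ.dualConj α ∈ R)
    (hσE : ∀ α ∈ R, ∃ c : ℂ, c ≠ 0 ∧ σ.toFun (E α) = c • E (σ.dualConj α))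
    -- the `σ`-positive system `R₀`
    (R₀ : Finset (Module.Dual ℂ gC))
    (hR₀R : R₀ ⊆ R)
    (hR₀Closed : ∀ α ∈ R₀, ∀ β ∈ R₀, α + β ∈ R → α + β ∈ R₀)
    (hR₀Union : ((R₀ : Set (Module.Dual ℂ gC)) ∪ σ.dualConj '' ↑R₀)
        = (R : Set (Module.Dual ℂ gC)))
    (hR₀Disj : ((R₀ : Set (Module.Dual ℂ gC)) ∩ σ.dualConj '' ↑R₀) = ∅)
    -- the Cartan part `h₀` of `k`, with `h₀ + σ(h₀) = H`
    (h₀ : Submodule ℂ gC) (hh₀ : h₀ ≤ H.toSubmodule)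
    (hHspan : ∀ x ∈ H, ∃ a ∈ h₀, ∃ b ∈ h₀, x = a + σ.toFun b)
    -- the subspace `𝒮 = span{⁅E α, E (-α)⁆ : α ∈ R₀^sym}`
    (S : Submodule ℂ gC)
    (hS : S = Submodule.span ℂ {x : gC | ∃ α ∈ R₀, -α ∈ R₀ ∧ x = ⁅E α, E (-α)⁆})
    (hSh₀ : S ≤ h₀)
    (hSσ : ∀ x ∈ ((S : Set gC) ∩ σ.toFun '' (S : Set gC)), x = 0)
    -- the regular subalgebra `k = h₀ + g(R₀)`
    (k : Submodule ℂ gC)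
    (hk : k = h₀ ⊔ Submodule.span ℂ (E '' ↑R₀))
    -- the 2-form `ω̂₀` on `h₀`, trivially extended to `k` by `0` on `g(R₀)`
    (ω₀ : gC →ₗ[ℂ] gC →ₗ[ℂ] ℂ)
    (halt : ∀ x : gC, ω₀ x x = 0)
    (htriv : ∀ x y : gC, x ∈ Submodule.span ℂ (E '' ↑R₀) ∨
        y ∈ Submodule.span ℂ (E '' ↑R₀) → ω₀ x y = 0)
    (hSker : ∀ s ∈ S, ∀ y : gC, ω₀ s y = 0)
    (hnondeg : ∀ x ∈ h₀, x ∈ σ.toFun '' (h₀ : Set gC) → σ.toFun x = x →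
        (∀ y ∈ h₀, y ∈ σ.toFun '' (h₀ : Set gC) → σ.toFun y = y →
          (ω₀ x y).im = 0) → x = 0) :
    -- conclusion: `(k, ω̂₀)` is a `g`-admissible pair
    (∀ x ∈ k, ∀ y ∈ k, ∀ z ∈ k, ω₀ x ⁅y, z⁆ + ω₀ z ⁅x, y⁆ + ω₀ y ⁅z, x⁆ = 0)
    ∧ (∀ x : gC, ∃ a ∈ k, ∃ b ∈ k, x = a + σ.toFun b)
    ∧ (∀ x ∈ k, σ.toFun x = x →
        (∀ y ∈ k, σ.toFun y = y → (ω₀ x y).im = 0) → x = 0) := by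
  subst hS hk
  have hE : IsRootDecomposition H.toSubmodule (R : Set (Module.Dual ℂ gC)) E :=
    ⟨habel, hroot, fun α hα β hβ hαβ => ⟨_, hbracket α hα β hβ hαβ⟩, hbracket0, hindep, hdisj,
      codisjoint_iff.2 hdecomp⟩
  have hadm : σ.IsAdmissiblePair (h₀ ⊔ rootSpan E R₀) ω₀ :=
    trivial_extension_admissible_pair_general hσH hE ⟨hR₀Closed, hR₀Union, hR₀Disj⟩
      (fun α hα => hσE α (hR₀R hα)) hh₀ hHspan hSh₀ (fun x => halt x)
      (fun v hv y _ => htriv v y (.inl hv)) (fun s hs y _ => hSker s hs y)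
      fun x hx hσx h => hnondeg x hx ⟨x, hx, hσx⟩ hσx fun y hy _ hσy => h y hy hσy
  exact ⟨hadm.isClosedOn, hadm.exists_eq_add, hadm.isImNondegenerateOn⟩
end
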